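/- arXiv:1612.08485 — 2 statements merged into one kernel-verified Lean document; each statement's English description precedes it below -/
import Mathlib

section
/- Let 0 ≤ q < d and let X and Y be cubical sets in ℝ^d with X ⊆ Y and #Y finite. Then |β_q(Y) − β_q(X)| ≤ #Y − #X. -/
open MeasureTheory Filter Topology

noncomputable section

/-- An elementary cube in `ℝ^d`: the `i`-th component is the elementary interval
`[l, l+1]` if the Boolean is `true` (nondegenerate) and `[l, l]` if `false` (degenerate). -/
abbrev ElemCube (d : ℕ) := Fin d → ℤ × Bool

/-- The dimension of an elementary cube: the number of nondegenerate components. -/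
def cubeDim {d : ℕ} (Q : ElemCube d) : ℕ :=
  (Finset.univ.filter fun i => (Q i).2 = true).card

/-- The geometric realization of an elementary cube as a subset of `ℝ^d`. -/
def cubeSet {d : ℕ} (Q : ElemCube d) : Set (Fin d → ℝ) :=
  {x | ∀ i, x i ∈ Set.Icc ((Q i).1 : ℝ) ((Q i).1 + (if (Q i).2 then 1 else 0))}

/-- A cubical set is a union of elementary cubes. -/
def IsCubical {d : ℕ} (X : Set (Fin d → ℝ)) : Prop :=
  ∃ S : Set (ElemCube d), X = ⋃ Q ∈ S, cubeSet Q

/-- The free `ℤ`-module generated by all elementary cubes of `ℝ^d` (all dimensions mixed). -/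
abbrev CubChain (d : ℕ) := ElemCube d →₀ ℤ

/-- The cubical boundary of a single elementary cube, defined by induction on the ambient
dimension, following the inductive definition: in `ℝ¹`, `∂ [l,l+1]^ = [l+1]^ - [l]^` and
`∂ Q̂ = 0` for degenerate `Q`; and for `Q = I × P`,
`∂ Q̂ = (∂ Î) ⋄ P̂ + (-1)^(dim I) Î ⋄ (∂ P̂)`, where `⋄` is the cubical product. -/
def boundaryCube : (d : ℕ) → ElemCube d → CubChain d
  | 0, _ => 0
  | d + 1, Q =>
      (if (Q 0).2 then
          Finsupp.single (Fin.cons ((Q 0).1 + 1, false) (fun i => Q i.succ)) (1 : ℤ)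
            - Finsupp.single (Fin.cons ((Q 0).1, false) (fun i => Q i.succ)) (1 : ℤ)
        else 0)
      + (if (Q 0).2 then (-1 : ℤ) else 1) •
          (boundaryCube d (fun i => Q i.succ)).sum
            (fun R n => Finsupp.single (Fin.cons (Q 0) R) n)

/-- The cubical boundary operator, the `ℤ`-linear extension of `boundaryCube`. -/
def boundaryHom (d : ℕ) : CubChain d →ₗ[ℤ] CubChain d :=
  Finsupp.lsum ℤ fun Q => LinearMap.toSpanSingleton ℤ (CubChain d) (boundaryCube d Q)

/-- `C_k^d(X)`: the submodule of chains supported on the `k`-dimensional elementary cubes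
contained in `X`. -/
def chainsOn (d k : ℕ) (X : Set (Fin d → ℝ)) : Submodule ℤ (CubChain d) :=
  Finsupp.supported ℤ ℤ {Q : ElemCube d | cubeDim Q = k ∧ cubeSet Q ⊆ X}

/-- `Z_q(X) = ker ∂_q^X`, the cycles of the cubical set `X` in degree `q`. -/
def cycleMod (d q : ℕ) (X : Set (Fin d → ℝ)) : Submodule ℤ (CubChain d) :=
  chainsOn d q X ⊓ LinearMap.ker (boundaryHom d)

/-- `B_q(X) = im ∂_{q+1}^X`, the boundaries of the cubical set `X` in degree `q`. -/
def boundaryMod (d q : ℕ) (X : Set (Fin d → ℝ)) : Submodule ℤ (CubChain d) :=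
  Submodule.map (boundaryHom d) (chainsOn d (q + 1) X)

/-- The `q`-th Betti number of a cubical set: the rank of the free part of the `q`-th
cubical homology `H_q(X) = Z_q(X) / B_q(X)`. -/
def betti (d q : ℕ) (X : Set (Fin d → ℝ)) : ℕ :=
  Module.finrank ℤ
    (↥(cycleMod d q X) ⧸ (boundaryMod d q X).comap (cycleMod d q X).subtype)

/-- `Λ_n = [-n, n]^d ⊆ ℝ^d`. -/
def lambda (d n : ℕ) : Set (Fin d → ℝ) := {x | ∀ i, x i ∈ Set.Icc (-(n : ℝ)) n}

/-- `#X`: the number of elementary cubes contained in `X` (junk value `0` if infinite). -/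
def cubeCount {d : ℕ} (X : Set (Fin d → ℝ)) : ℕ :=
  {Q : ElemCube d | cubeSet Q ⊆ X}.ncard

theorem aux_rank {A M : Type*} [CommRing A] [IsDomain A] [AddCommGroup M] [Module A M] (W Q R : Submodule A M) (n : ℕ)
    [Module.Finite A W] [Module.Finite A R] (hR : Module.finrank A R ≤ n) (h : W ≤ Q ⊔ R) :
    Module.finrank A W ≤ Module.finrank A (W ⊓ Q : Submodule A M) + n := by
  have h1 := Submodule.finrank_quotient_add_finrank (LinearMap.ker (Q.mkQ.domRestrict W))
  rw [(Q.mkQ.domRestrict W).quotKerEquivRange.finrank_eq] at h1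
  have h2 : Module.finrank A (LinearMap.ker (Q.mkQ.domRestrict W))
      = Module.finrank A (W ⊓ Q : Submodule A M) := by
    have : LinearMap.ker (Q.mkQ.domRestrict W) = Q.comap W.subtype := by
      ext x; simp
    rw [this, ← Submodule.finrank_map_subtype_eq, Submodule.map_comap_subtype]
  have h3 : LinearMap.range (Q.mkQ.domRestrict W) ≤ R.map Q.mkQ := by
    rintro _ ⟨x, rfl⟩
    obtain ⟨a, ha, b, hb, hab⟩ := Submodule.mem_sup.1 (h x.2)
    refine ⟨b, hb, ?_⟩
    simp only [LinearMap.domRestrict_apply, ← hab, map_add]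
    simpa using ha
  have h4 := Submodule.finrank_mono h3
  have h5 := Submodule.finrank_map_le Q.mkQ R
  omega

theorem aux_supp {d : ℕ} (T : Set (ElemCube d)) (hT : T.Finite) :
    Module.Finite ℤ (Finsupp.supported ℤ ℤ T) ∧
    Module.finrank ℤ (Finsupp.supported ℤ ℤ T) = T.ncard := by
  have := hT.fintype
  let e := Finsupp.supportedEquivFinsupp (M := ℤ) (R := ℤ) T
  refine ⟨Module.Finite.equiv e.symm, ?_⟩
  rw [e.finrank_eq, Module.finrank_finsupp_self, Set.ncard_eq_toFinset_card', Set.toFinset_card]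

theorem aux_face : ∀ (d : ℕ) (Q R : ElemCube d), R ∈ (boundaryCube d Q).support →
    cubeSet R ⊆ cubeSet Q := by
  intro d
  induction d with
  | zero => intro Q R h; simp [boundaryCube] at h
  | succ d ih =>
    intro Q R h x hx
    have key : (∃ l, (l = (Q 0).1 ∨ l = (Q 0).1 + 1) ∧ (Q 0).2 = true ∧
        R = Fin.cons (l, false) (fun i => Q i.succ)) ∨
        (∃ P ∈ (boundaryCube d (fun i => Q i.succ)).support, R = Fin.cons (Q 0) P) := by
      classical
      by_contra hcon
      push Not at hcon
      obtain ⟨hc1, hc2⟩ := hcon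
      rw [Finsupp.mem_support_iff] at h
      apply h
      rw [boundaryCube, Finsupp.add_apply, Finsupp.smul_apply]
      have e2 : ((boundaryCube d (fun i => Q i.succ)).sum
            (fun R n => Finsupp.single (Fin.cons (Q 0) R : ElemCube (d+1)) n)) R = 0 := by
        rw [Finsupp.sum_apply]
        refine Finset.sum_eq_zero fun P hP => ?_
        exact Finsupp.single_eq_of_ne (hc2 P hP)
      rw [e2, smul_zero, add_zero]
      split_ifs with hb
      · rw [Finsupp.sub_apply, Finsupp.single_eq_of_ne (hc1 _ (Or.inr rfl) hb),
          Finsupp.single_eq_of_ne (hc1 _ (Or.inl rfl) hb), sub_zero]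
      · rfl
    rcases key with ⟨l, hl, hb, rfl⟩ | ⟨P, hP, rfl⟩
    · intro i
      have hi := hx i
      refine Fin.cases (fun hi => ?_) (fun j hi => ?_) i hi
      · simp only [Fin.cons_zero, Set.mem_Icc] at hi
        rw [hb]
        rcases hl with rfl | rfl <;> push_cast at hi <;> simp at hi ⊢ <;>
          constructor <;> linarith
      · simpa using hi
    · intro i
      have h0 := hx 0
      have ht : (fun j => x (Fin.succ j)) ∈ cubeSet P := fun j => by simpa using hx j.succ
      have := ih _ _ hP ht
      refine Fin.cases ?_ (fun j => ?_) i
      · simpa using h0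
      · exact this j

theorem aux_bd (d k : ℕ) (X : Set (Fin d → ℝ)) :
    boundaryMod d k X ≤ Finsupp.supported ℤ ℤ {Q : ElemCube d | cubeSet Q ⊆ X} := by
  rintro _ ⟨c, hc, rfl⟩
  simp only [boundaryHom, Finsupp.lsum_apply, Finsupp.sum]
  refine Submodule.sum_mem _ fun Q hQ => ?_
  rw [LinearMap.toSpanSingleton_apply]
  refine Submodule.smul_mem _ _ ?_
  intro R hR
  exact (aux_face d Q R hR).trans (hc hQ).2

theorem aux_betti (d q : ℕ) (X : Set (Fin d → ℝ)) [Module.Finite ℤ (cycleMod d q X)] :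
    betti d q X + Module.finrank ℤ (cycleMod d q X ⊓ boundaryMod d q X : Submodule ℤ (CubChain d))
      = Module.finrank ℤ (cycleMod d q X) := by
  rw [betti, ← Submodule.finrank_quotient_add_finrank
    ((boundaryMod d q X).comap (cycleMod d q X).subtype),
    ← Submodule.finrank_map_subtype_eq _ ((boundaryMod d q X).comap (cycleMod d q X).subtype),
    Submodule.map_comap_subtype]

/-- If `X ⊆ Y` are cubical sets in `ℝ^d` with `#Y` finite and `0 ≤ q < d`,
then `|β_q(Y) - β_q(X)| ≤ #Y - #X`. -/
theorem betti_diff_le (d q : ℕ) (hq : q < d) (X Y : Set (Fin d → ℝ))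
    (hX : IsCubical X) (hY : IsCubical Y) (hXY : X ⊆ Y)
    (hfin : {Q : ElemCube d | cubeSet Q ⊆ Y}.Finite) :
    |(betti d q Y : ℤ) - (betti d q X : ℤ)| ≤ (cubeCount Y : ℤ) - (cubeCount X : ℤ) := by
  have hfX : {Q : ElemCube d | cubeSet Q ⊆ X}.Finite := hfin.subset fun Q h => h.trans hXY
  have fin : ∀ k, ∀ V : Set (Fin d → ℝ), {Q : ElemCube d | cubeSet Q ⊆ V}.Finite →
      Module.Finite ℤ (chainsOn d k V) := fun k V hV =>
    (aux_supp _ (hV.subset fun Q h => h.2)).1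
  have fle : ∀ {A B : Submodule ℤ (CubChain d)}, A ≤ B → Module.Finite ℤ B →
      Module.Finite ℤ A := fun {A B} h hB =>
    Module.Finite.of_injective (Submodule.inclusion h) (Submodule.inclusion_injective h)
  have fYq := fin q Y hfin
  have fZY : Module.Finite ℤ (cycleMod d q Y) := fle inf_le_left fYq
  have fZX : Module.Finite ℤ (cycleMod d q X) := fle inf_le_left (fin q X hfX)
  have fWY : Module.Finite ℤ
    (cycleMod d q Y ⊓ boundaryMod d q Y : Submodule ℤ (CubChain d)) := fle inf_le_left fZY
  set D : Set (ElemCube d) := {Q | cubeSet Q ⊆ Y} \ {Q | cubeSet Q ⊆ X} with hD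
  have hDc : (D.ncard : ℤ) = (cubeCount Y : ℤ) - (cubeCount X : ℤ) := by
    have := Set.ncard_sdiff_add_ncard_of_subset
      (s := {Q : ElemCube d | cubeSet Q ⊆ X}) (t := {Q | cubeSet Q ⊆ Y})
      (fun Q h => h.trans hXY) hfin
    simp only [cubeCount, hD]; omega
  have hDf : D.Finite := hfin.subset Set.sdiff_subset
  have split : ∀ k, ∃ R : Submodule ℤ (CubChain d), Module.Finite ℤ R ∧
      Module.finrank ℤ R ≤ D.ncard ∧ chainsOn d k Y ≤ chainsOn d k X ⊔ R := by
    intro k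
    refine ⟨Finsupp.supported ℤ ℤ D, (aux_supp D hDf).1, (aux_supp D hDf).2.le, ?_⟩
    rw [chainsOn, chainsOn, ← Finsupp.supported_union]
    apply Finsupp.supported_mono
    intro Q hQ
    by_cases h : cubeSet Q ⊆ X
    · exact Or.inl ⟨hQ.1, h⟩
    · exact Or.inr ⟨hQ.2, h⟩
  have mono : ∀ k, chainsOn d k X ≤ chainsOn d k Y := fun k =>
    Finsupp.supported_mono fun Q h => ⟨h.1, h.2.trans hXY⟩
  have mZ : cycleMod d q X ≤ cycleMod d q Y := inf_le_inf_right _ (mono q)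
  have mB : boundaryMod d q X ≤ boundaryMod d q Y := Submodule.map_mono (mono (q+1))
  have eZ : cycleMod d q Y ⊓ chainsOn d q X = cycleMod d q X := by
    apply le_antisymm
    · exact fun c hc => ⟨hc.2, hc.1.2⟩
    · exact le_inf mZ inf_le_left
  have eW : (cycleMod d q Y ⊓ boundaryMod d q Y) ⊓ boundaryMod d q X
      = cycleMod d q X ⊓ boundaryMod d q X := by
    apply le_antisymm
    · rintro c ⟨⟨⟨h1, h2⟩, -⟩, h3⟩
      exact ⟨⟨fun Q hQ => ⟨(h1 hQ).1, aux_bd d q X h3 hQ⟩, h2⟩, h3⟩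
    · exact le_inf (inf_le_inf mZ mB) inf_le_right
  have z1 := Submodule.finrank_mono mZ
  have w1 := Submodule.finrank_mono (inf_le_inf mZ mB)
  have z2 : Module.finrank ℤ (cycleMod d q Y) ≤ Module.finrank ℤ (cycleMod d q X) + D.ncard := by
    obtain ⟨R, fR, hR, h⟩ := split q
    have := aux_rank (cycleMod d q Y) (chainsOn d q X) R _ hR (inf_le_left.trans h)
    rwa [eZ] at this
  have w2 : Module.finrank ℤ (cycleMod d q Y ⊓ boundaryMod d q Y : Submodule ℤ (CubChain d)) ≤
      Module.finrank ℤ (cycleMod d q X ⊓ boundaryMod d q X : Submodule ℤ (CubChain d))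
        + D.ncard := by
    obtain ⟨R, fR, hR, h⟩ := split (q+1)
    have := aux_rank (cycleMod d q Y ⊓ boundaryMod d q Y) (boundaryMod d q X)
      (R.map (boundaryHom d)) _ ((Submodule.finrank_map_le _ _).trans hR)
      (inf_le_right.trans (by
        rw [boundaryMod, boundaryMod, ← Submodule.map_sup]; exact Submodule.map_mono h))
    rwa [eW] at this
  have bX := aux_betti d q X
  have bY := aux_betti d q Y
  rw [← hDc, abs_le]
  constructor <;> omega

end
end

section
/- Let X and Y be cubical sets in ℝ^d with X ⊆ Y. Assume there exists a cubical set Z = Q_1 ∪ ⋯ ∪ Q_m, where each Q_i is a d-dimensional elementary cube, such that Y \ X ⊆ Z. Then #Y − #X ≤ 3^d |Z|, where |Z| denotes the Lebesgue measure of Z. -/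
open MeasureTheory Filter Topology
open scoped ENNReal

noncomputable section

def ctr {d : ℕ} (Q : ElemCube d) : Fin d → ℝ :=
  fun i => ((Q i).1 : ℝ) + (if (Q i).2 then 1 / 2 else 0)

theorem ctr_mem {d : ℕ} (Q : ElemCube d) : ctr Q ∈ cubeSet Q := by
  intro i
  simp only [ctr, Set.mem_Icc]
  split_ifs <;> constructor <;> linarith

theorem half_int {a b : ℤ} (h1 : (a : ℝ) ≤ b + 1 / 2) (h2 : (b : ℝ) + 1 / 2 ≤ a + 1) :
    a = b := by
  have h3 : (a : ℝ) < ((b + 1 : ℤ) : ℝ) := by push_cast; linarith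
  have h4 : (b : ℝ) < ((a + 1 : ℤ) : ℝ) := by push_cast; linarith
  have h3 := Int.cast_lt.mp h3
  have h4 := Int.cast_lt.mp h4
  omega

theorem half_int_ne {a b : ℤ} (h1 : (a : ℝ) ≤ b + 1 / 2) (h2 : (b : ℝ) + 1 / 2 ≤ a) :
    False := by
  have := half_int h1 (by linarith)
  subst this
  linarith

theorem sub_of_ctr {d : ℕ} {P Q : ElemCube d} (h : ctr Q ∈ cubeSet P) :
    cubeSet Q ⊆ cubeSet P := by
  intro x hx i
  have h1 := h i
  have h2 := hx i
  simp only [ctr, Set.mem_Icc] at h1 h2 ⊢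
  obtain ⟨a1, a2⟩ := h1
  obtain ⟨b1, b2⟩ := h2
  by_cases hq : (Q i).2 = true
  · by_cases hp : (P i).2 = true
    · simp only [hq, hp, if_true] at *
      rw [half_int a1 a2]
      exact ⟨b1, b2⟩
    · simp only [hq, hp, if_true] at *
      exact (half_int_ne a1 (by simpa using a2)).elim
  · simp only [hq] at *
    simp only [Bool.false_eq_true, if_false, add_zero] at a1 a2 b1 b2
    exact ⟨by linarith, by linarith⟩

def faces {d : ℕ} (P : ElemCube d) : Finset (ElemCube d) :=
  Fintype.piFinset fun i => {((P i).1, true), ((P i).1, false), ((P i).1 + 1, false)}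

theorem card_faces {d : ℕ} (P : ElemCube d) : (faces P).card ≤ 3 ^ d := by
  unfold faces
  rw [Fintype.card_piFinset]
  calc _ ≤ ∏ _i : Fin d, 3 := Finset.prod_le_prod' fun i _ => Finset.card_le_three
    _ = 3 ^ d := by simp

theorem mem_faces {d : ℕ} {P Q : ElemCube d} (hP : ∀ i, (P i).2 = true)
    (h : ctr Q ∈ cubeSet P) : Q ∈ faces P := by
  unfold faces
  rw [Fintype.mem_piFinset]
  intro i
  have h1 := h i
  simp only [ctr, Set.mem_Icc, hP, if_true] at h1
  obtain ⟨a1, a2⟩ := h1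
  rcases hQ : Q i with ⟨l, b⟩
  rw [hQ] at a1 a2
  cases b
  · simp only [Bool.false_eq_true, if_false, add_zero] at a1 a2
    have a1 : (P i).1 ≤ l := by exact_mod_cast a1
    have a2 : l ≤ (P i).1 + 1 := by exact_mod_cast a2
    simp
    omega
  · simp only [if_true] at a1 a2
    simp [half_int a1 a2]

def openCube {d : ℕ} (P : ElemCube d) : Set (Fin d → ℝ) :=
  Set.univ.pi fun i => Set.Ioo ((P i).1 : ℝ) ((P i).1 + 1)

theorem vol_openCube {d : ℕ} (P : ElemCube d) : volume (openCube P) = 1 := by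
  unfold openCube
  rw [Real.volume_pi_Ioo]
  simp

theorem openCube_sub {d : ℕ} {P : ElemCube d} (hP : ∀ i, (P i).2 = true) :
    openCube P ⊆ cubeSet P := by
  intro x hx i
  have := hx i (Set.mem_univ i)
  simp only [hP, if_true]
  exact ⟨this.1.le, this.2.le⟩

theorem openCube_disj {d : ℕ} {P Q : ElemCube d} (hP : ∀ i, (P i).2 = true)
    (hQ : ∀ i, (Q i).2 = true) (hne : P ≠ Q) : Disjoint (openCube P) (openCube Q) := by
  rw [Set.disjoint_left]
  intro x hx hy
  apply hne
  funext i
  have h1 := hx i (Set.mem_univ i)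
  have h2 := hy i (Set.mem_univ i)
  simp only [Set.mem_Ioo] at h1 h2
  refine Prod.ext ?_ (by rw [hP, hQ])
  have h3 : ((P i).1 : ℝ) < (((Q i).1 + 1 : ℤ) : ℝ) := by push_cast; linarith
  have h4 : ((Q i).1 : ℝ) < (((P i).1 + 1 : ℤ) : ℝ) := by push_cast; linarith
  have h3 := Int.cast_lt.mp h3
  have h4 := Int.cast_lt.mp h4
  omega

/-- Let `X ⊆ Y` be cubical sets in `ℝ^d` and suppose there is a cubical set
`Z = Q_1 ∪ ⋯ ∪ Q_m`, a finite union of `d`-dimensional elementary cubes, with `Y \ X ⊆ Z`.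
Then `#Y - #X ≤ 3^d |Z|`, i.e. `#Y ≤ #X + 3^d |Z|`, where `|Z|` is the Lebesgue measure
of `Z` (stated in `ℝ≥0∞`, using the extended cardinalities of the sets of elementary cubes
contained in `Y` resp. `X`). -/
theorem count_diff_le_volume (d m : ℕ) (X Y : Set (Fin d → ℝ))
    (hX : IsCubical X) (hY : IsCubical Y) (hXY : X ⊆ Y)
    (Qs : Fin m → ElemCube d) (hQdim : ∀ i, cubeDim (Qs i) = d)
    (Z : Set (Fin d → ℝ)) (hZ : Z = ⋃ i, cubeSet (Qs i))
    (hcover : Y \ X ⊆ Z) :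
    ({Q : ElemCube d | cubeSet Q ⊆ Y}.encard : ℝ≥0∞) ≤
      ({Q : ElemCube d | cubeSet Q ⊆ X}.encard : ℝ≥0∞) + 3 ^ d * volume Z := by
  classical
  have hd : ∀ k i, (Qs k i).2 = true := by
    intro k i
    have h := hQdim k
    unfold cubeDim at h
    have h2 : (Finset.univ.filter fun i => (Qs k i).2 = true) = Finset.univ := by
      apply Finset.eq_univ_of_card
      simpa using h
    have := Finset.mem_univ i
    rw [← h2] at this
    simpa using this
  set T : Finset (ElemCube d) := Finset.univ.image Qs with hT
  have hTd : ∀ P ∈ T, ∀ i, (P i).2 = true := by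
    intro P hP
    obtain ⟨k, -, rfl⟩ := Finset.mem_image.mp hP
    exact hd k
  have hvol : (T.card : ℝ≥0∞) ≤ volume Z := by
    calc (T.card : ℝ≥0∞) = ∑ P ∈ T, volume (openCube P) := by simp [vol_openCube]
      _ = volume (⋃ P ∈ T, openCube P) := by
        rw [measure_biUnion_finset]
        · intro P hP Q hQ hne
          exact openCube_disj (hTd P hP) (hTd Q hQ) hne
        · intro P _
          exact MeasurableSet.univ_pi fun i => measurableSet_Ioo
      _ ≤ volume Z := by
        apply measure_mono
        rw [hZ]
        apply Set.iUnion₂_subset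
        intro P hP
        obtain ⟨k, -, rfl⟩ := Finset.mem_image.mp hP
        exact (openCube_sub (hd k)).trans (Set.subset_iUnion (fun k => cubeSet (Qs k)) k)
  have hsub : {Q : ElemCube d | cubeSet Q ⊆ Y} ⊆
      {Q : ElemCube d | cubeSet Q ⊆ X} ∪ ((T.biUnion faces : Finset (ElemCube d)) :
        Set (ElemCube d)) := by
    intro Q hQ
    by_cases hc : ctr Q ∈ X
    · left
      obtain ⟨S, rfl⟩ := hX
      obtain ⟨P, hPS, hP⟩ := Set.mem_iUnion₂.mp hc
      exact (sub_of_ctr hP).trans (Set.subset_biUnion_of_mem (u := fun Q => cubeSet Q) hPS)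
    · right
      have hz := hcover ⟨hQ (ctr_mem Q), hc⟩
      rw [hZ] at hz
      obtain ⟨k, hk⟩ := Set.mem_iUnion.mp hz
      rw [Finset.mem_coe, Finset.mem_biUnion]
      exact ⟨Qs k, Finset.mem_image_of_mem _ (Finset.mem_univ k), mem_faces (hd k) hk⟩
  have hcard : (T.biUnion faces).card ≤ T.card * 3 ^ d :=
    Finset.card_biUnion_le_card_mul _ _ _ fun P _ => card_faces P
  have h1 : {Q : ElemCube d | cubeSet Q ⊆ Y}.encard ≤
      {Q : ElemCube d | cubeSet Q ⊆ X}.encard + ((T.card * 3 ^ d : ℕ) : ℕ∞) := by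
    refine (Set.encard_le_encard hsub).trans ((Set.encard_union_le _ _).trans ?_)
    gcongr
    rw [Set.encard_coe_eq_coe_finsetCard]
    exact_mod_cast hcard
  calc _ ≤ (({Q : ElemCube d | cubeSet Q ⊆ X}.encard + ((T.card * 3 ^ d : ℕ) : ℕ∞) : ℕ∞) : ℝ≥0∞) :=
        ENat.toENNReal_le.mpr h1
    _ = ({Q : ElemCube d | cubeSet Q ⊆ X}.encard : ℝ≥0∞) + 3 ^ d * (T.card : ℝ≥0∞) := by
        rw [ENat.toENNReal_add, ENat.toENNReal_coe]
        push_cast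
        rw [mul_comm]
    _ ≤ _ := by gcongr
end
end
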